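/- There exists C > 0 such that for every Λ ≥ 2 and every p ∈ ℝ³: ∫_{|k|≤Λ} |k|⁴ B₀(k)² (1+|p−k|²)^{−1} dk ≤ C·log Λ. -/

import Mathlib

/-!
The integrand is at most `ω(k)⁻¹ ω(p - k)⁻²`, hence at most `ω(k)⁻³ + ω(p - k)⁻³`. As `ω⁻³` is
radially decreasing, its integral over a ball is largest when the ball is centred at the origin,
so the second summand contributes no more than the first, uniformly in `p`. The centred integral is
estimated in polar coordinates: `3 |B₁| ∫₀^Λ r² (1 + r²)^(-3/2) dr ≤ 3 |B₁| arsinh Λ`.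
-/

open MeasureTheory
open scoped ENNReal

noncomputable section

/-- The dispersion relation `ω(k) = √(1+|k|²)` of the massive scalar field. -/
def ω (k : EuclideanSpace ℝ (Fin 3)) : ℝ := Real.sqrt (1 + ‖k‖ ^ 2)

/-- The Gross dressing form factor `B₀(k) = 1/(√(ω(k))·(|k|²+ω(k)))`. -/
def B0 (k : EuclideanSpace ℝ (Fin 3)) : ℝ := 1 / (Real.sqrt (ω k) * (‖k‖ ^ 2 + ω k))

open Metric Set Module

theorem pow_mul_pow_le_pow_add_add_pow_add {α : Type*} [CommSemiring α] [LinearOrder α]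
    [IsOrderedRing α] [CanonicallyOrderedAdd α] (x y : α) (m n : ℕ) :
    x ^ m * y ^ n ≤ x ^ (m + n) + y ^ (m + n) := by
  rcases le_total x y with hxy | hyx
  · calc x ^ m * y ^ n ≤ y ^ m * y ^ n := by gcongr
      _ = y ^ (m + n) := (pow_add y m n).symm
      _ ≤ x ^ (m + n) + y ^ (m + n) := le_add_self
  · calc x ^ m * y ^ n ≤ x ^ m * x ^ n := by gcongr
      _ = x ^ (m + n) := (pow_add x m n).symm
      _ ≤ x ^ (m + n) + y ^ (m + n) := le_self_add

theorem arsinh_le_three_mul_log {x : ℝ} (hx : 2 ≤ x) : Real.arsinh x ≤ 3 * Real.log x := by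
  have hsqrt : √(1 + x ^ 2) ≤ 3 * x := Real.sqrt_le_iff.2 ⟨by positivity, by nlinarith⟩
  rw [← Real.exp_le_exp, Real.exp_arsinh, mul_comm, Real.exp_mul, Real.exp_log (by positivity),
    Real.rpow_ofNat]
  calc x + √(1 + x ^ 2) ≤ 2 ^ 2 * x := by linarith
    _ ≤ x ^ 2 * x := by gcongr
    _ = x ^ 3 := by ring

section Rearrangement

theorem measure_sdiff_le_measure_sdiff {α : Type*} [MeasurableSpace α] {μ : Measure α}
    {s t : Set α} (hs : MeasurableSet s) (ht : MeasurableSet t) (hst : μ s ≤ μ t)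
    (hμs : μ s ≠ ∞) : μ (s \ t) ≤ μ (t \ s) := by
  have hinter : μ (s ∩ t) ≠ ∞ := measure_ne_top_of_subset inter_subset_left hμs
  rw [← ENNReal.add_le_add_iff_left hinter, measure_inter_add_sdiff s ht, inter_comm,
    measure_inter_add_sdiff t hs]
  exact hst

theorem setLIntegral_le_setLIntegral_of_le_of_ge {α : Type*} [MeasurableSpace α] {μ : Measure α}
    {s t : Set α} {f : α → ℝ≥0∞} {c : ℝ≥0∞} (hs : MeasurableSet s) (ht : MeasurableSet t)
    (hst : μ s ≤ μ t) (hμs : μ s ≠ ∞) (hle : ∀ x ∈ s \ t, f x ≤ c)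
    (hge : ∀ x ∈ t \ s, c ≤ f x) : ∫⁻ x in s, f x ∂μ ≤ ∫⁻ x in t, f x ∂μ := by
  have hdiff : ∫⁻ x in s \ t, f x ∂μ ≤ ∫⁻ x in t \ s, f x ∂μ :=
    calc ∫⁻ x in s \ t, f x ∂μ ≤ ∫⁻ _ in s \ t, c ∂μ := setLIntegral_mono' (hs.diff ht) hle
      _ = c * μ (s \ t) := setLIntegral_const _ _
      _ ≤ c * μ (t \ s) := by gcongr c * ?_; exact measure_sdiff_le_measure_sdiff hs ht hst hμs
      _ = ∫⁻ _ in t \ s, c ∂μ := (setLIntegral_const _ _).symm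
      _ ≤ ∫⁻ x in t \ s, f x ∂μ := setLIntegral_mono' (ht.diff hs) hge
  rw [← lintegral_inter_add_sdiff f s ht, ← lintegral_inter_add_sdiff f t hs, inter_comm t s]
  gcongr

variable {E : Type*} [NormedAddCommGroup E] [ProperSpace E] [MeasurableSpace E] [BorelSpace E]
  {μ : Measure E} [μ.IsAddHaarMeasure] {f : E → ℝ≥0∞}

theorem setLIntegral_closedBall_le_of_norm_antitone (hf : ∀ x y, ‖x‖ ≤ ‖y‖ → f y ≤ f x)
    (p : E) (R : ℝ) : ∫⁻ x in closedBall p R, f x ∂μ ≤ ∫⁻ x in closedBall 0 R, f x ∂μ := by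
  refine setLIntegral_le_setLIntegral_of_le_of_ge (c := ⨆ x ∉ closedBall (0 : E) R, f x)
    measurableSet_closedBall measurableSet_closedBall (Measure.addHaar_closedBall_center μ p R).le
    measure_closedBall_lt_top.ne (fun x hx ↦ le_iSup₂_of_le x hx.2 le_rfl) fun y hy ↦
    iSup₂_le fun x hx ↦ hf y x ?_
  rw [mem_closedBall_zero_iff, not_le] at hx
  exact (mem_closedBall_zero_iff.1 hy.1).trans hx.le

theorem setLIntegral_closedBall_comp_sub_left (f : E → ℝ≥0∞) (p : E) (R : ℝ) :
    ∫⁻ x in closedBall 0 R, f (p - x) ∂μ = ∫⁻ x in closedBall p R, f x ∂μ := by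
  have hpreimage : (p - ·) ⁻¹' closedBall p R = closedBall 0 R := by
    ext x
    simp [dist_eq_norm]
  rw [← hpreimage]
  exact (Measure.measurePreserving_sub_left μ p).setLIntegral_comp_preimage_emb
    (MeasurableEquiv.subLeft p).measurableEmbedding f _

theorem setLIntegral_closedBall_pow_mul_comp_sub_pow_le (hfm : Measurable f)
    (hf : ∀ x y, ‖x‖ ≤ ‖y‖ → f y ≤ f x) (m n : ℕ) (p : E) (R : ℝ) :
    ∫⁻ x in closedBall 0 R, f x ^ m * f (p - x) ^ n ∂μ ≤
      2 * ∫⁻ x in closedBall 0 R, f x ^ (m + n) ∂μ := by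
  have hpow : ∀ x y, ‖x‖ ≤ ‖y‖ → f y ^ (m + n) ≤ f x ^ (m + n) := fun x y hxy ↦
    pow_le_pow_left' (hf x y hxy) _
  calc ∫⁻ x in closedBall 0 R, f x ^ m * f (p - x) ^ n ∂μ
      ≤ ∫⁻ x in closedBall 0 R, (f x ^ (m + n) + f (p - x) ^ (m + n)) ∂μ :=
        lintegral_mono fun x ↦ pow_mul_pow_le_pow_add_add_pow_add _ _ m n
    _ = ∫⁻ x in closedBall 0 R, f x ^ (m + n) ∂μ + ∫⁻ x in closedBall p R, f x ^ (m + n) ∂μ := by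
        rw [lintegral_add_left (hfm.pow_const _),
          setLIntegral_closedBall_comp_sub_left (μ := μ) (fun x ↦ f x ^ (m + n))]
    _ ≤ 2 * ∫⁻ x in closedBall 0 R, f x ^ (m + n) ∂μ := by
        rw [two_mul]
        exact add_le_add le_rfl (setLIntegral_closedBall_le_of_norm_antitone hpow p R)

end Rearrangement

section PolarCoordinates

theorem continuous_inv_sqrt_one_add_sq : Continuous fun r : ℝ ↦ (√(1 + r ^ 2))⁻¹ :=
  Continuous.inv₀ (by fun_prop) fun r ↦ by positivity

theorem setIntegral_Ioc_inv_sqrt_one_add_sq {R : ℝ} (hR : 0 ≤ R) :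
    ∫ r in Ioc 0 R, (√(1 + r ^ 2))⁻¹ = Real.arsinh R := by
  rw [← intervalIntegral.integral_of_le hR, intervalIntegral.integral_eq_sub_of_hasDerivAt
    (fun r _ ↦ Real.hasDerivAt_arsinh r) (continuous_inv_sqrt_one_add_sq.intervalIntegrable 0 R),
    Real.arsinh_zero, sub_zero]

theorem pow_pred_mul_inv_sqrt_one_add_sq_pow_le {d : ℕ} (hd : d ≠ 0) {r : ℝ} (hr : 0 ≤ r) :
    r ^ (d - 1) * (√(1 + r ^ 2))⁻¹ ^ d ≤ (√(1 + r ^ 2))⁻¹ := by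
  have hle : r * (√(1 + r ^ 2))⁻¹ ≤ 1 := by
    rw [← div_eq_mul_inv]
    exact div_le_one_of_le₀ (Real.le_sqrt_of_sq_le (by linarith)) (by positivity)
  calc r ^ (d - 1) * (√(1 + r ^ 2))⁻¹ ^ d
      = (r * (√(1 + r ^ 2))⁻¹) ^ (d - 1) * (√(1 + r ^ 2))⁻¹ := by
        rw [mul_pow, mul_assoc, pow_sub_one_mul hd]
    _ ≤ (√(1 + r ^ 2))⁻¹ :=
        mul_le_of_le_one_left (by positivity) (pow_le_one₀ (by positivity) hle)

variable {E : Type*} [NormedAddCommGroup E] [NormedSpace ℝ E] [FiniteDimensional ℝ E]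
  [Nontrivial E] [MeasurableSpace E] [BorelSpace E] (μ : Measure E) [μ.IsAddHaarMeasure]

theorem setIntegral_closedBall_fun_norm {F : Type*} [NormedAddCommGroup F] [NormedSpace ℝ F]
    (f : ℝ → F) (R : ℝ) :
    ∫ x in closedBall 0 R, f ‖x‖ ∂μ =
      finrank ℝ E • μ.real (ball 0 1) • ∫ r in Ioc 0 R, r ^ (finrank ℝ E - 1) • f r := by
  have hball : closedBall (0 : E) R = norm ⁻¹' Iic R := by
    ext x
    simp
  have hindicator : (closedBall (0 : E) R).indicator (fun x ↦ f ‖x‖) =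
      fun x ↦ (Iic R).indicator f ‖x‖ :=
    hball ▸ funext fun _ ↦ indicator_comp_right norm
  rw [← integral_indicator measurableSet_closedBall, hindicator, integral_fun_norm_addHaar μ,
    ← Ioi_inter_Iic, ← setIntegral_indicator measurableSet_Iic]
  simp only [indicator_smul]

theorem setIntegral_closedBall_inv_sqrt_one_add_norm_sq_pow_finrank_le {R : ℝ} (hR : 0 ≤ R) :
    ∫ x in closedBall 0 R, (√(1 + ‖x‖ ^ 2))⁻¹ ^ finrank ℝ E ∂μ ≤
      finrank ℝ E * μ.real (ball 0 1) * Real.arsinh R := by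
  rw [setIntegral_closedBall_fun_norm μ fun r ↦ (√(1 + r ^ 2))⁻¹ ^ finrank ℝ E, nsmul_eq_mul,
    smul_eq_mul, ← mul_assoc, ← setIntegral_Ioc_inv_sqrt_one_add_sq hR]
  refine mul_le_mul_of_nonneg_left (setIntegral_mono_on ?_ ?_ measurableSet_Ioc fun r hr ↦
    pow_pred_mul_inv_sqrt_one_add_sq_pow_le finrank_pos.ne' hr.1.le) (by positivity)
  · exact ((continuous_pow _).smul (continuous_inv_sqrt_one_add_sq.pow _)).integrableOn_Ioc
  · exact continuous_inv_sqrt_one_add_sq.integrableOn_Ioc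

theorem setLIntegral_closedBall_inv_sqrt_one_add_norm_sq_pow_finrank_le {R : ℝ} (hR : 0 ≤ R) :
    ∫⁻ x in closedBall 0 R, ENNReal.ofReal (√(1 + ‖x‖ ^ 2))⁻¹ ^ finrank ℝ E ∂μ ≤
      ENNReal.ofReal (finrank ℝ E * μ.real (ball 0 1) * Real.arsinh R) := by
  have hcont : Continuous fun x : E ↦ (√(1 + ‖x‖ ^ 2))⁻¹ ^ finrank ℝ E :=
    (continuous_inv_sqrt_one_add_sq.comp continuous_norm).pow _
  have hint : IntegrableOn (fun x : E ↦ (√(1 + ‖x‖ ^ 2))⁻¹ ^ finrank ℝ E) (closedBall 0 R) μ :=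
    hcont.continuousOn.integrableOn_compact (isCompact_closedBall 0 R)
  simp_rw [← ENNReal.ofReal_pow (inv_nonneg.2 (Real.sqrt_nonneg _))]
  rw [← ofReal_integral_eq_lintegral_ofReal hint (ae_of_all _ fun x ↦ by positivity)]
  exact ENNReal.ofReal_le_ofReal
    (setIntegral_closedBall_inv_sqrt_one_add_norm_sq_pow_finrank_le μ hR)

end PolarCoordinates

section FormFactor

theorem one_le_ω (k : EuclideanSpace ℝ (Fin 3)) : 1 ≤ ω k :=
  Real.one_le_sqrt.2 (le_add_of_nonneg_right (by positivity))

theorem ω_sq (k : EuclideanSpace ℝ (Fin 3)) : ω k ^ 2 = 1 + ‖k‖ ^ 2 :=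
  Real.sq_sqrt (by positivity)

theorem inv_ω_le_inv_ω {k l : EuclideanSpace ℝ (Fin 3)} (h : ‖k‖ ≤ ‖l‖) : (ω l)⁻¹ ≤ (ω k)⁻¹ :=
  inv_anti₀ (zero_lt_one.trans_le (one_le_ω k)) (Real.sqrt_le_sqrt (by gcongr))

theorem norm_pow_four_mul_B0_sq_le (k : EuclideanSpace ℝ (Fin 3)) :
    ‖k‖ ^ 4 * B0 k ^ 2 ≤ (ω k)⁻¹ := by
  have hω : 0 < ω k := zero_lt_one.trans_le (one_le_ω k)
  have hle : ‖k‖ ^ 2 / (‖k‖ ^ 2 + ω k) ≤ 1 := div_le_one_of_le₀ (by linarith) (by positivity)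
  calc ‖k‖ ^ 4 * B0 k ^ 2 = (‖k‖ ^ 2 / (‖k‖ ^ 2 + ω k)) ^ 2 * (ω k)⁻¹ := by
        rw [B0, div_pow, mul_pow, Real.sq_sqrt hω.le]
        field_simp
    _ ≤ (ω k)⁻¹ := mul_le_of_le_one_left (by positivity) (pow_le_one₀ (by positivity) hle)

theorem ofReal_norm_pow_four_mul_B0_sq_mul_inv_le (p k : EuclideanSpace ℝ (Fin 3)) :
    ENNReal.ofReal (‖k‖ ^ 4 * B0 k ^ 2 * (1 + ‖p - k‖ ^ 2)⁻¹) ≤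
      ENNReal.ofReal (ω k)⁻¹ ^ 1 * ENNReal.ofReal (ω (p - k))⁻¹ ^ 2 := by
  have hk : 0 ≤ (ω k)⁻¹ := inv_nonneg.2 (zero_le_one.trans (one_le_ω k))
  have hpk : 0 ≤ (ω (p - k))⁻¹ := inv_nonneg.2 (zero_le_one.trans (one_le_ω (p - k)))
  rw [pow_one, ← ENNReal.ofReal_pow hpk, ← ENNReal.ofReal_mul hk, inv_pow, ω_sq]
  gcongr
  exact norm_pow_four_mul_B0_sq_le k

end FormFactor

theorem log_cutoff_bound_general {Λ : ℝ} (hΛ : 0 ≤ Λ) (p : EuclideanSpace ℝ (Fin 3)) :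
    ∫⁻ k in {k : EuclideanSpace ℝ (Fin 3) | ‖k‖ ≤ Λ},
        ENNReal.ofReal (‖k‖ ^ 4 * B0 k ^ 2 * (1 + ‖p - k‖ ^ 2)⁻¹) ≤
      ENNReal.ofReal
        (6 * volume.real (ball (0 : EuclideanSpace ℝ (Fin 3)) 1) * Real.arsinh Λ) := by
  have hball : {k : EuclideanSpace ℝ (Fin 3) | ‖k‖ ≤ Λ} = closedBall 0 Λ := by
    ext k
    simp
  have hmeas : Measurable fun k ↦ ENNReal.ofReal (ω k)⁻¹ := by
    unfold ω
    fun_prop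
  have hcentred := setLIntegral_closedBall_inv_sqrt_one_add_norm_sq_pow_finrank_le
    (volume : Measure (EuclideanSpace ℝ (Fin 3))) hΛ
  rw [finrank_euclideanSpace_fin] at hcentred
  rw [hball]
  calc ∫⁻ k in closedBall 0 Λ, ENNReal.ofReal (‖k‖ ^ 4 * B0 k ^ 2 * (1 + ‖p - k‖ ^ 2)⁻¹)
      ≤ ∫⁻ k in closedBall 0 Λ, ENNReal.ofReal (ω k)⁻¹ ^ 1 * ENNReal.ofReal (ω (p - k))⁻¹ ^ 2 :=
        lintegral_mono (ofReal_norm_pow_four_mul_B0_sq_mul_inv_le p)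
    _ ≤ 2 * ∫⁻ k in closedBall 0 Λ, ENNReal.ofReal (ω k)⁻¹ ^ 3 :=
        setLIntegral_closedBall_pow_mul_comp_sub_pow_le hmeas
          (fun _ _ h ↦ ENNReal.ofReal_le_ofReal (inv_ω_le_inv_ω h)) 1 2 p Λ
    _ ≤ 2 * ENNReal.ofReal (3 * volume.real (ball (0 : EuclideanSpace ℝ (Fin 3)) 1) *
          Real.arsinh Λ) := by
        gcongr
        exact_mod_cast hcentred
    _ = ENNReal.ofReal (2 * (3 * volume.real (ball (0 : EuclideanSpace ℝ (Fin 3)) 1) *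
          Real.arsinh Λ)) := by
        rw [ENNReal.ofReal_mul zero_le_two, ENNReal.ofReal_ofNat]
    _ = ENNReal.ofReal (6 * volume.real (ball (0 : EuclideanSpace ℝ (Fin 3)) 1) *
          Real.arsinh Λ) := by
        ring_nf

/-- There is `C > 0` such that for every `Λ ≥ 2` and every `p ∈ ℝ³`,
`∫_{|k|≤Λ} |k|⁴ B₀(k)² (1+|p−k|²)^{−1} dk ≤ C·log Λ`. -/
theorem log_cutoff_bound :
    ∃ C > 0, ∀ Λ : ℝ, 2 ≤ Λ → ∀ p : EuclideanSpace ℝ (Fin 3),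
      ∫⁻ k in {k : EuclideanSpace ℝ (Fin 3) | ‖k‖ ≤ Λ},
          ENNReal.ofReal (‖k‖ ^ 4 * B0 k ^ 2 * (1 + ‖p - k‖ ^ 2)⁻¹) ≤
        ENNReal.ofReal (C * Real.log Λ) := by
  have hv : 0 < volume.real (ball (0 : EuclideanSpace ℝ (Fin 3)) 1) :=
    ENNReal.toReal_pos (measure_ball_pos _ _ one_pos).ne' measure_ball_lt_top.ne
  refine ⟨18 * volume.real (ball (0 : EuclideanSpace ℝ (Fin 3)) 1), by positivity, fun Λ hΛ p ↦
    (log_cutoff_bound_general (by linarith) p).trans (ENNReal.ofReal_le_ofReal ?_)⟩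
  calc 6 * volume.real (ball (0 : EuclideanSpace ℝ (Fin 3)) 1) * Real.arsinh Λ
      ≤ 6 * volume.real (ball (0 : EuclideanSpace ℝ (Fin 3)) 1) * (3 * Real.log Λ) := by
        gcongr
        exact arsinh_le_three_mul_log hΛ
    _ = 18 * volume.real (ball (0 : EuclideanSpace ℝ (Fin 3)) 1) * Real.log Λ := by ring

end
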